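/- Let I ⊆ ℝ be a nontrivial interval, U ⊆ ℝ^m open, g: U → ℝ^{m×m} a smooth map with values in symmetric positive-definite matrices, and Φ: I × U × ℝ^m → ℝ^m continuous. Let v: I → U be absolutely continuous on compact subintervals with derivative v̇(τ) defined almost everywhere and square-integrable on compact subintervals, and suppose that for some fixed τ₀ ∈ I the function p(τ) := g(v(τ)) v̇(τ) satisfies, for almost every τ ∈ I, p(τ) = p(τ₀) + ∫_{τ₀}^{τ} Φ(s, v(s), v̇(s)) ds, the integrand being locally integrable on I. Then v is twice continuously differentiable on I, and d/dτ [ g(v(τ)) v̇(τ) ] = Φ(τ, v(τ), v̇(τ)) holds for every τ ∈ I. -/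

import Mathlib

/-!
The momentum `P(τ) = p(τ₀) + ∫_{τ₀}^τ Φ(s, v, v') ds` is continuous, and `g(v) v' = P` a.e., so
`v'` agrees a.e. with the continuous function `w = g(v)⁻¹ P`. Substituting `w` for `v'` under both
integrals, the fundamental theorem of calculus gives `v̇ = w` and `Ṗ = Φ(τ, v, w)` everywhere on
`I`. Hence `v` and `P` are `C¹`, so `w = g(v)⁻¹ P` is `C¹` (`contDiffOn_inv_mulVec`) and `v` is `C²`,
while `g(v) v̇ = g(v) w = P` has the asserted derivative.

Integrability of `v'` is not known in advance (its components need not even be measurable a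
priori); continuity of `v` is obtained without it in `continuousOn_of_integral_eq`.
-/


open MeasureTheory Real Set

/-- Euclidean dot product on `ℝ^n`. -/
def dotp {n : ℕ} (a b : Fin n → ℝ) : ℝ := ∑ i, a i * b i

open Topology

/-- Around a point `τ` of an interval `I`, a compact subinterval of `I` containing a prescribed
base point `τ₀` is a relative neighbourhood; `I` may be open, half-open or unbounded. -/
lemma exists_Icc_nhdsWithin {I : Set ℝ} {τ₀ τ : ℝ} (hτ₀ : τ₀ ∈ I) (hτ : τ ∈ I) :
    ∃ a ∈ I, ∃ b ∈ I, a ≤ b ∧ τ₀ ∈ Icc a b ∧ τ ∈ Icc a b ∧ Icc a b ∈ 𝓝[I] τ := by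
  obtain ⟨a, haI, haτ, ha⟩ : ∃ a ∈ I, a ≤ τ ∧ ∀ᶠ x in 𝓝[I] τ, a ≤ x := by
    by_cases h : ∃ a ∈ I, a < τ
    · obtain ⟨a, haI, h⟩ := h
      exact ⟨a, haI, h.le, nhdsWithin_le_nhds (Ici_mem_nhds h)⟩
    · push Not at h
      exact ⟨τ, hτ, le_rfl, eventually_nhdsWithin_of_forall h⟩
  obtain ⟨b, hbI, hbτ, hb⟩ : ∃ b ∈ I, τ ≤ b ∧ ∀ᶠ x in 𝓝[I] τ, x ≤ b := by
    by_cases h : ∃ b ∈ I, τ < b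
    · obtain ⟨b, hbI, h⟩ := h
      exact ⟨b, hbI, h.le, nhdsWithin_le_nhds (Iic_mem_nhds h)⟩
    · push Not at h
      exact ⟨τ, hτ, le_rfl, eventually_nhdsWithin_of_forall h⟩
  refine ⟨min a τ₀, ?_, max b τ₀, ?_, ?_, ?_, ?_, ?_⟩
  · rcases min_choice a τ₀ with h | h <;> rw [h] <;> assumption
  · rcases max_choice b τ₀ with h | h <;> rw [h] <;> assumption
  · exact (min_le_right _ _).trans (le_max_right _ _)
  · exact ⟨min_le_right _ _, le_max_right _ _⟩
  · exact ⟨(min_le_left _ _).trans haτ, hbτ.trans (le_max_left _ _)⟩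
  · filter_upwards [ha, hb] with x h1 h2
    exact ⟨(min_le_left _ _).trans h1, h2.trans (le_max_left _ _)⟩

lemma continuousOn_primitive_of_intervalIntegrable {E : Type*} [NormedAddCommGroup E]
    [NormedSpace ℝ E] {I : Set ℝ} {F : ℝ → E}
    (hF : ∀ a ∈ I, ∀ b ∈ I, IntervalIntegrable F volume a b) {τ₀ : ℝ} (hτ₀ : τ₀ ∈ I) :
    ContinuousOn (fun t => ∫ s in τ₀..t, F s) I := by
  intro τ hτ
  obtain ⟨a, ha, b, hb, hab, h0, h1, hN⟩ := exists_Icc_nhdsWithin hτ₀ hτ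
  have h := intervalIntegral.continuousOn_primitive_interval' (hF a ha b hb)
    (a := τ₀) (by rwa [uIcc_of_le hab])
  rw [uIcc_of_le hab] at h
  exact (h τ h1).mono_of_mem_nhdsWithin hN

/-- The fundamental theorem of calculus relative to an arbitrary interval, endpoints included. -/
lemma hasDerivWithinAt_primitive {E : Type*} [NormedAddCommGroup E]
    [NormedSpace ℝ E] [CompleteSpace E] {I : Set ℝ} (hI : I.OrdConnected) {f : ℝ → E}
    (hf : ContinuousOn f I) {τ₀ τ : ℝ} (hτ₀ : τ₀ ∈ I) (hτ : τ ∈ I) :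
    HasDerivWithinAt (fun t => ∫ s in τ₀..t, f s) (f τ) I τ := by
  obtain ⟨a, ha, b, hb, hab, h0, h1, hN⟩ := exists_Icc_nhdsWithin hτ₀ hτ
  -- A continuous extension of `f` from `[a, b]` to the line has the same primitive near `τ`.
  let F : ℝ → E := IccExtend hab ((Icc a b).domRestrict f)
  have hFc : Continuous F := (hf.mono (hI.out ha hb)).domRestrict.Icc_extend'
  have hFe : ∀ x ∈ Icc a b, F x = f x := fun x hx => by
    simp [F, IccExtend_of_mem hab _ hx]
  have hint : ∀ t ∈ Icc a b, ∫ s in τ₀..t, f s = ∫ s in τ₀..t, F s := fun t ht =>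
    intervalIntegral.integral_congr fun x hx => (hFe x (ordConnected_Icc.uIcc_subset h0 ht hx)).symm
  have hd := (hFc.integral_hasStrictDerivAt τ₀ τ).hasDerivAt.hasDerivWithinAt (s := I)
  rw [hFe τ h1] at hd
  exact hd.congr_of_eventuallyEq (Filter.eventually_of_mem hN hint) (hint τ h1)

lemma contDiffOn_det {m : ℕ} {k : WithTop ℕ∞} {I : Set ℝ} {A : ℝ → Matrix (Fin m) (Fin m) ℝ}
    (hA : ∀ i j, ContDiffOn ℝ k (fun t => A t i j) I) :
    ContDiffOn ℝ k (fun t => (A t).det) I := by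
  simp only [Matrix.det_apply]
  exact ContDiffOn.sum fun σ _ => (contDiffOn_prod fun i _ => hA _ _).const_smul _

lemma contDiffOn_inv_mulVec {m : ℕ} {k : WithTop ℕ∞} {I : Set ℝ}
    {A : ℝ → Matrix (Fin m) (Fin m) ℝ} {P : ℝ → Fin m → ℝ}
    (hA : ∀ i j, ContDiffOn ℝ k (fun t => A t i j) I) (hdet : ∀ t ∈ I, (A t).det ≠ 0)
    (hP : ContDiffOn ℝ k P I) :
    ContDiffOn ℝ k (fun t => (A t)⁻¹.mulVec (P t)) I := by
  have hadj : ∀ i j, ContDiffOn ℝ k (fun t => (A t).adjugate i j) I := by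
    intro i j
    simp only [Matrix.adjugate_apply]
    refine contDiffOn_det fun i' j' => ?_
    by_cases h : i' = j
    · subst h
      simpa using contDiffOn_const
    · simpa [Matrix.updateRow_ne h] using hA i' j'
  rw [contDiffOn_pi]
  intro i
  simp only [Matrix.inv_def, Ring.inverse_eq_inv', Matrix.mulVec, dotProduct, Matrix.smul_apply,
    smul_eq_mul]
  exact ContDiffOn.sum fun j _ =>
    (((contDiffOn_det hA).inv hdet).mul (hadj i j)).mul ((contDiffOn_pi.1 hP) j)

/-- The integral representation alone forces continuity. The Bochner integral of a
non-integrable function is `0`, so where `v'` fails to be integrable between two points of `I` the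
values of `v` there agree, and then `v` is constant on all of `I`. -/
lemma continuousOn_of_integral_eq {E : Type*} [NormedAddCommGroup E] [NormedSpace ℝ E]
    {I : Set ℝ} {v v' : ℝ → E} (hAC : ∀ a ∈ I, ∀ t ∈ I, v t = v a + ∫ s in a..t, v' s) :
    ContinuousOn v I := by
  by_cases h : ∀ a ∈ I, ∀ b ∈ I, IntervalIntegrable v' volume a b
  · rcases I.eq_empty_or_nonempty with rfl | ⟨a, ha⟩
    · exact continuousOn_empty _
    · exact (continuousOn_const.add (continuousOn_primitive_of_intervalIntegrable h ha)).congr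
        (hAC a ha)
  · push Not at h
    obtain ⟨a, ha, b, hb, hab⟩ := h
    have key : ∀ x ∈ I, ∀ y ∈ I, ¬ IntervalIntegrable v' volume x y → v y = v x := by
      intro x hx y hy hxy
      rw [hAC x hx y hy, intervalIntegral.integral_undef hxy, add_zero]
    refine (continuousOn_const (c := v a)).congr fun x hx => ?_
    by_cases hax : IntervalIntegrable v' volume a x
    · have hxb : ¬ IntervalIntegrable v' volume x b := fun hxb => hab (hax.trans hxb)
      exact (key x hx b hb hxb).symm.trans (key a ha b hb hab)
    · exact key a ha x hx hax

/-- Regularity: if `v` is locally absolutely continuous on a nontrivial interval `I`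
with locally square-integrable derivative `v'`, and the momentum `p = g(v)v'` satisfies
the integral identity `p(τ) = p(τ₀) + ∫_{τ₀}^{τ} Φ(s,v(s),v'(s)) ds` a.e., then `v` is
twice continuously differentiable on `I` and `d/dτ[g(v)v̇] = Φ(τ,v,v̇)` everywhere on `I`. -/
theorem stmt8 {m : ℕ} (I : Set ℝ) (hI : I.OrdConnected) (hIne : I.Nontrivial)
    (U : Set (Fin m → ℝ)) (hU : IsOpen U)
    (g : (Fin m → ℝ) → Matrix (Fin m) (Fin m) ℝ)
    (hg : ∀ i j, ContDiffOn ℝ (⊤ : ℕ∞) (fun y => g y i j) U)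
    (hgpos : ∀ x ∈ U, (g x).PosDef)
    (Φ : ℝ × (Fin m → ℝ) × (Fin m → ℝ) → (Fin m → ℝ))
    (hΦ : ContinuousOn Φ (I ×ˢ U ×ˢ (Set.univ : Set (Fin m → ℝ))))
    (v v' : ℝ → (Fin m → ℝ)) (hvU : ∀ τ ∈ I, v τ ∈ U)
    -- `v` is absolutely continuous on compact subintervals with a.e. derivative `v'`:
    (hAC : ∀ a ∈ I, ∀ t ∈ I, v t = v a + ∫ s in a..t, v' s)
    -- `v'` is square-integrable on compact subintervals:
    (hL2 : ∀ a ∈ I, ∀ b ∈ I, IntegrableOn (fun s => dotp (v' s) (v' s)) (Set.uIcc a b))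
    (τ₀ : ℝ) (hτ₀ : τ₀ ∈ I)
    (hΦint : LocallyIntegrableOn (fun s => Φ (s, v s, v' s)) I)
    (hp : ∀ᵐ τ ∂(volume.restrict I),
      Matrix.mulVec (g (v τ)) (v' τ)
        = Matrix.mulVec (g (v τ₀)) (v' τ₀) + ∫ s in τ₀..τ, Φ (s, v s, v' s)) :
    ContDiffOn ℝ 2 v I ∧
      ∀ τ ∈ I, HasDerivWithinAt
        (fun σ : ℝ => Matrix.mulVec (g (v σ)) (derivWithin v I σ))
        (Φ (τ, v τ, derivWithin v I τ)) I τ := by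
  have hIconv : Convex ℝ I := hI.convex
  have hIm : MeasurableSet I := hI.measurableSet
  have hIu : UniqueDiffOn ℝ I := by
    obtain ⟨a, ha, b, hb, hab⟩ := hIne.exists_lt
    refine uniqueDiffOn_convex hIconv ⟨(a + b) / 2, ?_⟩
    exact interior_mono (Ioo_subset_Icc_self.trans (hI.out ha hb))
      (by rw [isOpen_Ioo.interior_eq]; constructor <;> linarith)
  have hdet : ∀ t ∈ I, (g (v t)).det ≠ 0 := fun t ht => (hgpos _ (hvU t ht)).det_pos.ne'
  have hvc : ContinuousOn v I := continuousOn_of_integral_eq hAC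
  have hgv : ∀ k : ℕ∞, ContDiffOn ℝ k v I → ∀ i j, ContDiffOn ℝ k (fun t => g (v t) i j) I :=
    fun k hv i j => ((hg i j).of_le (by exact_mod_cast le_top)).comp hv hvU
  have hΦii : ∀ a ∈ I, ∀ b ∈ I,
      IntervalIntegrable (fun s => Φ (s, v s, v' s)) volume a b := fun a ha b hb =>
    (hΦint.integrableOn_compact_subset (hI.uIcc_subset ha hb) isCompact_uIcc).intervalIntegrable
  set P : ℝ → Fin m → ℝ := fun τ =>
    Matrix.mulVec (g (v τ₀)) (v' τ₀) + ∫ s in τ₀..τ, Φ (s, v s, v' s) with hPdef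
  have hPc : ContinuousOn P I :=
    continuousOn_const.add (continuousOn_primitive_of_intervalIntegrable hΦii hτ₀)
  -- The continuous representative of the a.e. derivative `v'`.
  set w : ℝ → Fin m → ℝ := fun τ => (g (v τ))⁻¹.mulVec (P τ) with hwdef
  have hwc : ContinuousOn w I := by
    have := contDiffOn_inv_mulVec (k := 0) (hgv 0 (contDiffOn_zero.2 hvc)) hdet
      (contDiffOn_zero.2 hPc)
    exact contDiffOn_zero.1 this
  have hgw : ∀ t ∈ I, (g (v t)).mulVec (w t) = P t := fun t ht => by
    simp only [hwdef, Matrix.mulVec_mulVec]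
    rw [Matrix.mul_nonsing_inv _ (hdet t ht).isUnit, Matrix.one_mulVec]
  have hae : ∀ᵐ s, s ∈ I → v' s = w s := by
    filter_upwards [(ae_restrict_iff' hIm).1 hp] with s hs hsI
    have h := hs hsI
    change _ = P s at h
    simp only [hwdef]
    rw [← h, Matrix.mulVec_mulVec, Matrix.nonsing_inv_mul _ (hdet s hsI).isUnit,
      Matrix.one_mulVec]
  have hvd : ∀ τ ∈ I, HasDerivWithinAt v (w τ) I τ := by
    intro τ hτ
    have hv : ∀ t ∈ I, v t = v τ₀ + ∫ s in τ₀..t, w s := fun t ht => by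
      rw [hAC τ₀ hτ₀ t ht]
      congr 1
      refine intervalIntegral.integral_congr_ae ?_
      filter_upwards [hae] with s hs hst
      exact hs (hI.uIcc_subset hτ₀ ht (uIoc_subset_uIcc hst))
    exact ((hasDerivWithinAt_primitive hI hwc hτ₀ hτ).const_add (v τ₀)).congr hv (hv τ hτ)
  have hdw : ∀ τ ∈ I, derivWithin v I τ = w τ := fun τ hτ => (hvd τ hτ).derivWithin (hIu τ hτ)
  have hΦc : ContinuousOn (fun s => Φ (s, v s, w s)) I :=
    hΦ.comp (continuousOn_id.prodMk (hvc.prodMk hwc)) fun s hs => ⟨hs, hvU s hs, mem_univ _⟩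
  have hPd : ∀ τ ∈ I, HasDerivWithinAt P (Φ (τ, v τ, w τ)) I τ := by
    intro τ hτ
    have hP : ∀ t ∈ I, P t = Matrix.mulVec (g (v τ₀)) (v' τ₀)
        + ∫ s in τ₀..t, Φ (s, v s, w s) := fun t ht => by
      simp only [hPdef]
      congr 1
      refine intervalIntegral.integral_congr_ae ?_
      filter_upwards [hae] with s hs hst
      rw [hs (hI.uIcc_subset hτ₀ ht (uIoc_subset_uIcc hst))]
    exact ((hasDerivWithinAt_primitive hI hΦc hτ₀ hτ).const_add _).congr hP (hP τ hτ)
  have hC1 : ∀ {f f' : ℝ → Fin m → ℝ}, ContinuousOn f' I →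
      (∀ τ ∈ I, HasDerivWithinAt f (f' τ) I τ) → ContDiffOn ℝ 1 f I := by
    intro f f' hc hd
    rw [contDiffOn_one_iff_derivWithin hIu]
    exact ⟨fun τ hτ => (hd τ hτ).differentiableWithinAt,
      hc.congr fun τ hτ => (hd τ hτ).derivWithin (hIu τ hτ)⟩
  have hw1 : ContDiffOn ℝ 1 w I :=
    contDiffOn_inv_mulVec (hgv 1 (hC1 hwc hvd)) hdet (hC1 hΦc hPd)
  refine ⟨?_, fun τ hτ => ?_⟩
  · rw [show (2 : WithTop ℕ∞) = 1 + 1 by norm_num, contDiffOn_succ_iff_derivWithin hIu]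
    exact ⟨fun τ hτ => (hvd τ hτ).differentiableWithinAt, by simp, hw1.congr hdw⟩
  · have he : ∀ t ∈ I, Matrix.mulVec (g (v t)) (derivWithin v I t) = P t := fun t ht => by
      rw [hdw t ht, hgw t ht]
    rw [hdw τ hτ]
    exact (hPd τ hτ).congr he (he τ hτ)
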